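/- Every uncrossable family of cycles is strongly uncrossable: if 𝒞 is uncrossable, C₁, C₂ ∈ 𝒞, and v, w are two vertices lying on both C₁ and C₂, then there exist a v-w-path P₁ in C₁ and a v-w-path P₂ in C₂ such that both edge sets P₁ + P₂ and (C₁ − P₁) + (C₂ − P₂) contain a cycle of 𝒞. -/

import Mathlib

open Finset

variable {V : Type*} [DecidableEq V]

/-- The edge set of a (simple) cycle in `G`. -/
def IsCycleEdges (G : SimpleGraph V) (s : Finset (Sym2 V)) : Prop :=
  ∃ (u : V) (c : G.Walk u u), c.IsCycle ∧ c.edges.toFinset = s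

/-- The edge set of a (simple) path from `v` to `w` in `G`. -/
def IsPathEdges (G : SimpleGraph V) (v w : V) (s : Finset (Sym2 V)) : Prop :=
  ∃ p : G.Walk v w, p.IsPath ∧ p.edges.toFinset = s

/-- The set of vertices covered by an edge set. -/
def edgeVerts (s : Finset (Sym2 V)) : Set V := {x | ∃ e ∈ s, x ∈ e}

/-- A family of cycles (given by their edge sets) is uncrossable:
for `C₁, C₂` in the family and a `v`-`w`-path `P₂` contained in `C₂` sharing only its
endpoints `v, w` with `C₁`, there is a `v`-`w`-path `P₁` contained in `C₁` such that
`P₁ + P₂` belongs to the family and `(C₁ - P₁) + (C₂ - P₂)` contains a member of the family. -/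
def Uncrossable (G : SimpleGraph V) (𝒞 : Set (Finset (Sym2 V))) : Prop :=
  ∀ C₁ ∈ 𝒞, ∀ C₂ ∈ 𝒞, ∀ v w : V, v ≠ w → ∀ P₂ : Finset (Sym2 V),
    IsPathEdges G v w P₂ → P₂ ⊆ C₂ →
    edgeVerts P₂ ∩ edgeVerts C₁ ⊆ {v, w} →
    v ∈ edgeVerts C₁ → w ∈ edgeVerts C₁ →
    ∃ P₁ : Finset (Sym2 V), IsPathEdges G v w P₁ ∧ P₁ ⊆ C₁ ∧
      (P₁ ∪ P₂) ∈ 𝒞 ∧ ∃ C ∈ 𝒞, C ⊆ (C₁ \ P₁) ∪ (C₂ \ P₂)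

/-- An edge set is good (w.r.t. a family `𝒞` of cycles) if it contains the edge set of a
cycle in `𝒞`. -/
def Good (𝒞 : Set (Finset (Sym2 V))) (s : Finset (Sym2 V)) : Prop :=
  ∃ C ∈ 𝒞, C ⊆ s

/-- A family of cycles is strongly uncrossable: for `C₁, C₂` in the family and two
vertices `v, w` lying on both cycles, there are `v`-`w`-paths `P₁ ⊆ C₁` and `P₂ ⊆ C₂`
such that both `P₁ + P₂` and `(C₁ - P₁) + (C₂ - P₂)` are good. -/
def StronglyUncrossable (G : SimpleGraph V) (𝒞 : Set (Finset (Sym2 V))) : Prop :=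
  ∀ C₁ ∈ 𝒞, ∀ C₂ ∈ 𝒞, ∀ v w : V, v ≠ w →
    v ∈ edgeVerts C₁ → v ∈ edgeVerts C₂ → w ∈ edgeVerts C₁ → w ∈ edgeVerts C₂ →
    ∃ P₁ P₂ : Finset (Sym2 V),
      IsPathEdges G v w P₁ ∧ P₁ ⊆ C₁ ∧ IsPathEdges G v w P₂ ∧ P₂ ⊆ C₂ ∧
      Good 𝒞 (P₁ ∪ P₂) ∧ Good 𝒞 ((C₁ \ P₁) ∪ (C₂ \ P₂))

open SimpleGraph

/-- A walk ending in `S` can be split at its first vertex lying in `S`. -/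
lemma SimpleGraph.Walk.exists_append_first_mem {V : Type*} {G : SimpleGraph V} {S : Set V} {u w : V}
    (p : G.Walk u w) (hw : w ∈ S) :
    ∃ (x : V) (q : G.Walk u x) (r : G.Walk x w), x ∈ S ∧ p = q.append r ∧
      ∀ y ∈ q.support, y ∈ S → y = x := by
  induction p with
  | nil => exact ⟨_, .nil, .nil, hw, rfl, by simp⟩
  | @cons a b c hab p ih =>
    by_cases ha : a ∈ S
    · exact ⟨a, .nil, .cons hab p, ha, rfl, by simp⟩
    · obtain ⟨x, q, r, hx, rfl, hq⟩ := ih hw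
      refine ⟨x, .cons hab q, r, hx, rfl, fun y hy hyS => ?_⟩
      rw [Walk.support_cons, List.mem_cons] at hy
      rcases hy with rfl | hy
      · exact absurd hyS ha
      · exact hq y hy hyS

lemma mem_edgeVerts_left {V : Type*} {s : Finset (Sym2 V)} {a b : V} (h : s(a, b) ∈ s) :
    a ∈ edgeVerts s :=
  ⟨_, h, Sym2.mem_mk_left a b⟩

lemma mem_edgeVerts_right {V : Type*} {s : Finset (Sym2 V)} {a b : V} (h : s(a, b) ∈ s) :
    b ∈ edgeVerts s :=
  ⟨_, h, Sym2.mem_mk_right a b⟩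

lemma edgeVerts_mono {V : Type*} {s t : Finset (Sym2 V)} (h : s ⊆ t) : edgeVerts s ⊆ edgeVerts t :=
  fun _ ⟨e, he, hx⟩ => ⟨e, h he, hx⟩

lemma edgeVerts_union (s t : Finset (Sym2 V)) :
    edgeVerts (s ∪ t) = edgeVerts s ∪ edgeVerts t := by
  ext x
  simp [edgeVerts, or_and_right, exists_or]

lemma edgeVerts_edges_subset {G : SimpleGraph V} {u w : V} (p : G.Walk u w) :
    edgeVerts p.edges.toFinset ⊆ {x | x ∈ p.support} := by
  rintro x ⟨e, he, hx⟩
  exact p.mem_support_of_mem_edges (List.mem_toFinset.mp he) hx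

lemma start_mem_edgeVerts_edges {G : SimpleGraph V} {u w : V} (p : G.Walk u w) (h : u ≠ w) :
    u ∈ edgeVerts p.edges.toFinset := by
  cases p with
  | nil => exact absurd rfl h
  | cons hab p => exact mem_edgeVerts_left (List.mem_toFinset.mpr List.mem_cons_self)

lemma end_mem_edgeVerts_edges {G : SimpleGraph V} {u w : V} (p : G.Walk u w) (h : u ≠ w) :
    w ∈ edgeVerts p.edges.toFinset := by
  simpa using start_mem_edgeVerts_edges p.reverse h.symm

lemma Good.mono {V : Type*} {𝒞 : Set (Finset (Sym2 V))} {s t : Finset (Sym2 V)} (h : Good 𝒞 s)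
    (hst : s ⊆ t) : Good 𝒞 t :=
  let ⟨C, hC, hCs⟩ := h
  ⟨C, hC, hCs.trans hst⟩

/-- If two edge sets meet only in vertices of `S`, then a path in their union with no inner vertex
in `S` stays in one of them. -/
lemma SimpleGraph.Walk.IsPath.edges_subset_or {G : SimpleGraph V} {S : Set V}
    {B B' : Finset (Sym2 V)} (hS : edgeVerts B ∩ edgeVerts B' ⊆ S) {x y : V} {p : G.Walk x y}
    (hp : p.IsPath) (hB : p.edges.toFinset ⊆ B ∪ B')
    (hpS : ∀ z ∈ p.support, z ∈ S → z = x ∨ z = y) :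
    p.edges.toFinset ⊆ B ∨ p.edges.toFinset ⊆ B' := by
  induction p with
  | nil => simp
  | @cons a b c hab p ih =>
    rw [Walk.cons_isPath_iff] at hp
    rw [Walk.edges_cons, List.toFinset_cons, Finset.insert_subset_iff] at hB ⊢
    rw [Finset.insert_subset_iff]
    have hpS' : ∀ z ∈ p.support, z ∈ S → z = b ∨ z = c := by
      intro z hz hzS
      rcases hpS z (by simp [hz]) hzS with rfl | rfl
      · exact absurd hz hp.2
      · exact Or.inr rfl
    by_cases hbc : b = c
    · subst hbc
      rw [(Walk.isPath_iff_nil.mp hp.1).eq_nil]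
      simpa using Finset.mem_union.mp hB.1
    · have hbS : b ∉ S := by
        intro hb
        rcases hpS b (by simp) hb with h | h
        · exact hab.ne h.symm
        · exact hbc h
      have hb := start_mem_edgeVerts_edges p hbc
      rcases ih hp.1 hB.2 hpS', Finset.mem_union.mp hB.1 with ⟨h | h, h' | h'⟩
      · exact Or.inl ⟨h', h⟩
      · exact absurd (hS ⟨edgeVerts_mono h hb, mem_edgeVerts_right h'⟩) hbS
      · exact absurd (hS ⟨mem_edgeVerts_right h', edgeVerts_mono h hb⟩) hbS
      · exact Or.inr ⟨h', h⟩

/-- A path contained in a member of an uncrossable family forms a good set with one of the two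
parts into which its endpoints split another member. -/
lemma Uncrossable.good_union_or {G : SimpleGraph V} {𝒞 : Set (Finset (Sym2 V))}
    (h : Uncrossable G 𝒞) {C : Finset (Sym2 V)} (hC : C ∈ 𝒞) {v w : V} (hvw : v ≠ w)
    {p : G.Walk v w} (hp : p.IsPath) (hpC : p.edges.toFinset ⊆ C) {B B' : Finset (Sym2 V)}
    (hB : B ∪ B' ∈ 𝒞) (hdisj : edgeVerts B ∩ edgeVerts B' ⊆ {v, w})
    (hv : v ∈ edgeVerts (B ∪ B')) (hw : w ∈ edgeVerts (B ∪ B')) :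
    Good 𝒞 (p.edges.toFinset ∪ B) ∨ Good 𝒞 (p.edges.toFinset ∪ B') := by
  induction hn : p.length using Nat.strong_induction_on generalizing v B B' with
  | _ n ih =>
  subst hn
  cases p with
  | nil => exact absurd rfl hvw
  | @cons _ u _ hvu p =>
  obtain ⟨x, q, r, hx, rfl, hq⟩ := p.exists_append_first_mem hw
  have hq' := (Walk.cons_isPath_iff _ _).mp hp
  have hvx : v ≠ x := by
    rintro rfl
    exact hq'.2 (by simp)
  obtain ⟨a, ha⟩ : ∃ a : G.Walk v x, a = Walk.cons hvu q := ⟨_, rfl⟩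
  have happ : Walk.cons hvu (q.append r) = a.append r := by rw [ha, Walk.cons_append]
  rw [happ] at hp hpC ⊢
  have haC : a.edges.toFinset ⊆ C := by
    refine Finset.Subset.trans ?_ hpC
    intro e he
    simp only [Walk.edges_append, List.toFinset_append, Finset.mem_union]
    exact Or.inl he
  have haB : edgeVerts a.edges.toFinset ∩ edgeVerts (B ∪ B') ⊆ {v, x} := by
    rintro z ⟨hz, hzB⟩
    have hz := edgeVerts_edges_subset a hz
    rw [Set.mem_ofPred_eq, ha, Walk.support_cons, List.mem_cons] at hz
    rcases hz with rfl | hz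
    · exact Or.inl rfl
    · exact Or.inr (hq z hz hzB)
  obtain ⟨_, ⟨s, hs, rfl⟩, hsB, hsC, -⟩ :=
    h _ hB C hC v x hvx _ ⟨a, hp.of_append_left, rfl⟩ haC haB hv hx
  rw [Walk.edges_append, List.toFinset_append]
  by_cases hws : w ∈ s.support ∧ x ≠ w
  · obtain ⟨hws, hxw⟩ := hws
    obtain ⟨s₁, s₂, rfl⟩ := Walk.mem_support_iff_exists_append.mp hws
    have hs₁ := hs.of_append_left
    have hs₂ := hs.of_append_right
    have hmeet : ∀ z ∈ s₁.support, z ∈ s₂.support → z = w := by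
      intro z hz₁ hz₂
      by_contra hzw
      rw [Walk.isPath_def, Walk.support_append] at hs
      rw [← s₂.cons_tail_support, List.mem_cons] at hz₂
      exact (List.nodup_append'.mp hs).2.2 hz₁ (hz₂.resolve_left hzw)
    rw [Walk.edges_append, List.toFinset_append] at hsB hsC
    have hsB₁ := Finset.union_subset_left hsB
    have hsB₂ := Finset.union_subset_right hsB
    have h₁ := hs₁.edges_subset_or hdisj hsB₁ (fun z _ hz => hz)
    have h₂ := hs₂.edges_subset_or hdisj hsB₂ (fun z hz hzS => by
      rcases hzS with rfl | hzS
      · exact absurd (hmeet z s₁.start_mem_support hz) hvw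
      · exact Or.inl hzS)
    have hrlt : r.length < (Walk.cons hvu (q.append r)).length := by
      grind [Walk.length_cons, Walk.length_append]
    have key := ih r.length hrlt hxw hp.of_append_right
      (B := s₂.edges.toFinset) (B' := s₁.edges.toFinset ∪ a.edges.toFinset)
      (by
        refine Finset.Subset.trans ?_ hpC
        simp)
      (by
        rwa [Finset.union_left_comm, ← Finset.union_assoc])
      (by
        rw [edgeVerts_union]
        rintro z ⟨hz₂, hz₁ | hza⟩
        · exact Or.inr (hmeet z (edgeVerts_edges_subset _ hz₁) (edgeVerts_edges_subset _ hz₂))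
        · rcases haB ⟨hza, edgeVerts_mono hsB₂ hz₂⟩ with rfl | hz
          · exact absurd (hmeet z s₁.start_mem_support (edgeVerts_edges_subset _ hz₂)) hvw
          · exact Or.inl hz)
      (edgeVerts_mono Finset.subset_union_left (end_mem_edgeVerts_edges s₂ hxw.symm))
      (edgeVerts_mono Finset.subset_union_left (start_mem_edgeVerts_edges s₂ hxw.symm)) rfl
    have hgood : Good 𝒞 (s₁.edges.toFinset ∪ s₂.edges.toFinset ∪ a.edges.toFinset) :=
      ⟨_, hsC, Finset.Subset.rfl⟩
    rcases h₁, h₂ with ⟨h₁ | h₁, h₂ | h₂⟩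
    · exact Or.inl (hgood.mono (by clear * - h₁ h₂; grind))
    · exact key.symm.imp (fun k => k.mono (by clear * - h₁ h₂; grind))
        (fun k => k.mono (by clear * - h₁ h₂; grind))
    · exact key.imp (fun k => k.mono (by clear * - h₁ h₂; grind))
        (fun k => k.mono (by clear * - h₁ h₂; grind))
    · exact Or.inr (hgood.mono (by clear * - h₁ h₂; grind))
  · have hgood : Good 𝒞 (s.edges.toFinset ∪ a.edges.toFinset) := ⟨_, hsC, Finset.Subset.rfl⟩
    refine (hs.edges_subset_or hdisj hsB ?_).imp (fun k => hgood.mono (by clear * - k; grind))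
      (fun k => hgood.mono (by clear * - k; grind))
    rintro z hz (rfl | rfl)
    · exact Or.inl rfl
    · exact Or.inr (by_contra fun hne => hws ⟨hz, fun e => hne e.symm⟩)

/-- Two vertices of a cycle split it into two paths meeting only in these vertices. -/
lemma IsCycleEdges.exists_paths {G : SimpleGraph V} {C : Finset (Sym2 V)}
    (hC : IsCycleEdges G C) {v w : V} (hvw : v ≠ w) (hv : v ∈ edgeVerts C)
    (hw : w ∈ edgeVerts C) :
    ∃ p q : G.Walk v w, p.IsPath ∧ q.IsPath ∧ p.edges.toFinset ∪ q.edges.toFinset = C ∧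
      C \ p.edges.toFinset = q.edges.toFinset ∧ C \ q.edges.toFinset = p.edges.toFinset ∧
      edgeVerts p.edges.toFinset ∩ edgeVerts q.edges.toFinset ⊆ {v, w} := by
  obtain ⟨u, c, hc, rfl⟩ := hC
  have hvc : v ∈ c.support := edgeVerts_edges_subset c hv
  have hperm := (c.rotate_edges v hvc).perm
  have hcE : (c.rotate v hvc).edges.toFinset = c.edges.toFinset :=
    List.toFinset_eq_of_perm _ _ hperm
  replace hc := hc.rotate hvc
  rw [← hcE] at hw ⊢
  generalize c.rotate v hvc = d at hc hw ⊢
  have hwd : w ∈ d.support := edgeVerts_edges_subset d hw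
  obtain ⟨p, q, rfl⟩ := Walk.mem_support_iff_exists_append.mp hwd
  have hp := hc.isPath_of_append_left (Walk.not_nil_of_ne hvw.symm)
  have hq := hc.isPath_of_append_right (Walk.not_nil_of_ne hvw)
  have hedges : Disjoint p.edges.toFinset q.edges.toFinset := by
    have := hc.edges_nodup
    rw [Walk.edges_append] at this
    exact List.disjoint_toFinset_iff_disjoint.mpr (List.disjoint_of_nodup_append this)
  have hsupp : p.support.tail.Disjoint q.support.tail := by
    have := hc.support_nodup
    rw [Walk.tail_support_append] at this
    exact List.disjoint_of_nodup_append this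
  refine ⟨p, q.reverse, hp, hq.reverse, ?_, ?_, ?_, ?_⟩
  · simp
  · simpa [Finset.union_sdiff_left] using hedges.symm
  · simpa [Finset.union_sdiff_right] using hedges
  · rintro z ⟨hzp, hzq⟩
    have hzp : z ∈ p.support := edgeVerts_edges_subset _ hzp
    have hzq : z ∈ q.reverse.support := edgeVerts_edges_subset _ hzq
    rw [Walk.support_reverse, List.mem_reverse, ← q.cons_tail_support, List.mem_cons] at hzq
    rw [← p.cons_tail_support, List.mem_cons] at hzp
    rcases hzp with rfl | hzp
    · exact Or.inl rfl
    · rcases hzq with rfl | hzq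
      · exact Or.inr rfl
      · exact absurd hzq (hsupp hzp)

/-- Every uncrossable family of cycles is strongly uncrossable. -/
theorem uncrossable_stronglyUncrossable (G : SimpleGraph V)
    (𝒞 : Set (Finset (Sym2 V))) (hcyc : ∀ s ∈ 𝒞, IsCycleEdges G s)
    (h : Uncrossable G 𝒞) : StronglyUncrossable G 𝒞 := by
  intro C₁ hC₁ C₂ hC₂ v w hvw hv₁ hv₂ hw₁ hw₂
  obtain ⟨a, a', ha, ha', haC, hCa, hCa', hA⟩ := (hcyc C₁ hC₁).exists_paths hvw hv₁ hw₁
  obtain ⟨b, b', hb, hb', hbC, hCb, hCb', hB⟩ := (hcyc C₂ hC₂).exists_paths hvw hv₂ hw₂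
  have haC₁ : a.edges.toFinset ⊆ C₁ := haC ▸ Finset.subset_union_left
  have haC₁' : a'.edges.toFinset ⊆ C₁ := haC ▸ Finset.subset_union_right
  have hbC₂ : b.edges.toFinset ⊆ C₂ := hbC ▸ Finset.subset_union_left
  have hbC₂' : b'.edges.toFinset ⊆ C₂ := hbC ▸ Finset.subset_union_right
  have h₁ := h.good_union_or hC₁ hvw ha haC₁ (hbC ▸ hC₂) hB (hbC ▸ hv₂) (hbC ▸ hw₂)
  have h₂ := h.good_union_or hC₁ hvw ha' haC₁' (hbC ▸ hC₂) hB (hbC ▸ hv₂) (hbC ▸ hw₂)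
  have h₃ := h.good_union_or hC₂ hvw hb hbC₂ (haC ▸ hC₁) hA (haC ▸ hv₁) (haC ▸ hw₁)
  have h₄ := h.good_union_or hC₂ hvw hb' hbC₂' (haC ▸ hC₁) hA (haC ▸ hv₁) (haC ▸ hw₁)
  rw [Finset.union_comm b.edges.toFinset, Finset.union_comm b.edges.toFinset] at h₃
  rw [Finset.union_comm b'.edges.toFinset, Finset.union_comm b'.edges.toFinset] at h₄
  have key : (Good 𝒞 (a.edges.toFinset ∪ b.edges.toFinset) ∧
      Good 𝒞 (a'.edges.toFinset ∪ b'.edges.toFinset)) ∨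
      (Good 𝒞 (a.edges.toFinset ∪ b'.edges.toFinset) ∧
      Good 𝒞 (a'.edges.toFinset ∪ b.edges.toFinset)) := by tauto
  rcases key with ⟨hg, hg'⟩ | ⟨hg, hg'⟩
  · exact ⟨_, _, ⟨a, ha, rfl⟩, haC₁, ⟨b, hb, rfl⟩, hbC₂, hg, by rwa [hCa, hCb]⟩
  · exact ⟨_, _, ⟨a, ha, rfl⟩, haC₁, ⟨b', hb', rfl⟩, hbC₂', hg, by rwa [hCa, hCb']⟩
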